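/- Under the KKT setup for a single storage unit at a single time period, if g_ch = 0, g_dc > 0, and λ_p > 0 (the Relaxation conditions in [16], Condition C8), then p_ch · p_dc = 0, i.e., no simultaneous charging and discharging occurs. -/

import Mathlib

/-!
Charging one unit and at once discharging the `η_ch * η_dc` units recovered from it leaves the
stored energy unchanged, so adding the charging stationarity equation to `η_ch * η_dc` times the
discharging one eliminates the energy price `Γ`. What remains says that the same combination of the
multipliers of `0 ≤ p_ch` and `0 ≤ p_dc` is at least the marginal cost of this round trip. If that
cost is positive, one of the two multipliers is nonzero, and complementary slackness forces its
power to vanish.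
-/

section RoundTrip

variable {K : Type*} [Field K] {η_ch η_dc c d c' d' x : K}

/-- The marginal cost of a round trip through the storage unit: charging one unit at marginal cost
`c` and discharging the recovered `η_ch * η_dc` units at marginal cost `d`. Applied to multipliers
instead of costs, it gives the combination in which the energy price cancels. -/
def roundTripCost (η_ch η_dc c d : K) : K :=
  c + η_ch * η_dc * d

lemma roundTripCost_add_mul_sub_div (hη_dc : η_dc ≠ 0) :
    roundTripCost η_ch η_dc (c + η_ch * x) (d - x / η_dc) = roundTripCost η_ch η_dc c d := by
  unfold roundTripCost
  field_simp
  ring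

lemma mul_eq_zero_of_roundTripCost_ne_zero {μ ν p q : K} (hμ : μ * p = 0) (hν : ν * q = 0)
    (hcost : roundTripCost η_ch η_dc μ ν ≠ 0) : p * q = 0 := by
  by_contra hpq
  have hμ_zero : μ = 0 := (mul_eq_zero.mp hμ).resolve_right (left_ne_zero_of_mul hpq)
  have hν_zero : ν = 0 := (mul_eq_zero.mp hν).resolve_right (right_ne_zero_of_mul hpq)
  exact hcost (by simp [roundTripCost, hμ_zero, hν_zero])

variable [LinearOrder K] [IsStrictOrderedRing K]

lemma roundTripCost_le_roundTripCost (hη : 0 ≤ η_ch * η_dc) (hc : c ≤ c') (hd : d ≤ d') :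
    roundTripCost η_ch η_dc c d ≤ roundTripCost η_ch η_dc c' d' :=
  add_le_add hc (mul_le_mul_of_nonneg_left hd hη)

lemma roundTripCost_add_sub_pos {g_ch g_dc lam_p : K} (hη_nonneg : 0 ≤ η_ch * η_dc)
    (hη_lt_one : η_ch * η_dc < 1) (hg_ch : 0 ≤ g_ch) (hg_dc : 0 ≤ g_dc) (hlam_p : 0 < lam_p) :
    0 < roundTripCost η_ch η_dc (g_ch + lam_p) (g_dc - lam_p) := by
  calc
    0 < g_ch + η_ch * η_dc * g_dc + (1 - η_ch * η_dc) * lam_p :=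
      add_pos_of_nonneg_of_pos (add_nonneg hg_ch (mul_nonneg hη_nonneg hg_dc))
        (mul_pos (sub_pos.mpr hη_lt_one) hlam_p)
    _ = roundTripCost η_ch η_dc (g_ch + lam_p) (g_dc - lam_p) := by
      unfold roundTripCost
      ring

theorem condition_C8_exact_relaxation_general
    {g_ch g_dc Δt Pch Pdc p_ch p_dc Γ lam_p lam_ch1 lam_ch2 lam_dc1 lam_dc2 lam_S1 lam_S2
      lam_relax : K}
    (hηch : 0 ≤ η_ch) (hηdc : 0 < η_dc) (hPch : 0 < Pch) (hPdc : 0 < Pdc)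
    (hpch : 0 ≤ p_ch) (hpdc : 0 ≤ p_dc) (hch2 : 0 ≤ lam_ch2) (hdc2 : 0 ≤ lam_dc2)
    (hS1 : 0 ≤ lam_S1) (hS2 : 0 ≤ lam_S2) (hrelax : 0 ≤ lam_relax)
    (hcs1 : lam_ch1 * p_ch = 0) (hcs2 : lam_dc1 * p_dc = 0)
    (hstat1 : g_ch + lam_p - lam_ch1 + lam_ch2 + lam_relax / Pch + 2 * lam_S2 * p_ch
      + η_ch * Γ * Δt = 0)
    (hstat2 : g_dc - lam_p - lam_dc1 + lam_dc2 + lam_relax / Pdc + 2 * lam_S1 * p_dc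
      - Γ * Δt / η_dc = 0)
    (hcost : 0 < roundTripCost η_ch η_dc (g_ch + lam_p) (g_dc - lam_p)) :
    p_ch * p_dc = 0 := by
  have hcharge : g_ch + lam_p + η_ch * (Γ * Δt) ≤ lam_ch1 := by
    have : 0 ≤ lam_ch2 + lam_relax / Pch + 2 * lam_S2 * p_ch := by positivity
    linarith
  have hdischarge : g_dc - lam_p - Γ * Δt / η_dc ≤ lam_dc1 := by
    have : 0 ≤ lam_dc2 + lam_relax / Pdc + 2 * lam_S1 * p_dc := by positivity
    linarith
  have hmultipliers : 0 < roundTripCost η_ch η_dc lam_ch1 lam_dc1 :=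
    calc
      0 < roundTripCost η_ch η_dc (g_ch + lam_p) (g_dc - lam_p) := hcost
      _ = roundTripCost η_ch η_dc (g_ch + lam_p + η_ch * (Γ * Δt))
            (g_dc - lam_p - Γ * Δt / η_dc) :=
        (roundTripCost_add_mul_sub_div hηdc.ne').symm
      _ ≤ roundTripCost η_ch η_dc lam_ch1 lam_dc1 :=
        roundTripCost_le_roundTripCost (mul_nonneg hηch hηdc.le) hcharge hdischarge
  exact mul_eq_zero_of_roundTripCost_ne_zero hcs1 hcs2 hmultipliers.ne'

end RoundTrip

theorem condition_C8_exact_relaxation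
    (η_ch η_dc g_ch g_dc Δt Pch Pdc p_ch p_dc Γ lam_p lam_ch1 lam_ch2 lam_dc1 lam_dc2 lam_S1 lam_S2 lam_relax : ℝ)
    (hηch0 : 0 < η_ch) (hηch1 : η_ch < 1) (hηdc0 : 0 < η_dc) (hηdc1 : η_dc < 1)
    (hΔt : 0 < Δt) (hPch : 0 < Pch) (hPdc : 0 < Pdc)
    (hpch : 0 ≤ p_ch) (hpdc : 0 ≤ p_dc)
    (hch1 : 0 ≤ lam_ch1) (hch2 : 0 ≤ lam_ch2) (hdc1 : 0 ≤ lam_dc1) (hdc2 : 0 ≤ lam_dc2)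
    (hS1 : 0 ≤ lam_S1) (hS2 : 0 ≤ lam_S2) (hrelax : 0 ≤ lam_relax)
    (hcs1 : lam_ch1 * p_ch = 0) (hcs2 : lam_dc1 * p_dc = 0)
    (hstat1 : g_ch + lam_p - lam_ch1 + lam_ch2 + lam_relax / Pch + 2 * lam_S2 * p_ch + η_ch * Γ * Δt = 0)
    (hstat2 : g_dc - lam_p - lam_dc1 + lam_dc2 + lam_relax / Pdc + 2 * lam_S1 * p_dc - Γ * Δt / η_dc = 0)
    (hC8_1a : g_ch = 0) (hC8_1b : g_dc > 0) (hC8_2 : lam_p > 0) :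
    p_ch * p_dc = 0 := by
  have hcost := roundTripCost_add_sub_pos (mul_nonneg hηch0.le hηdc0.le)
    (mul_lt_one_of_nonneg_of_lt_one_left hηch0.le hηch1 hηdc1.le) hC8_1a.ge hC8_1b.le hC8_2
  exact condition_C8_exact_relaxation_general hηch0.le hηdc0 hPch hPdc hpch hpdc hch2 hdc2 hS1 hS2
    hrelax hcs1 hcs2 hstat1 hstat2 hcost
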